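/- Let T = S_v be a nonempty stratum of dimension d = n − r(v) with d < n. A nonempty stratum S_w of dimension d + 1 (i.e. with r(w) = r(v) − 1) satisfies T ⊆ closure(S_w) if and only if w is obtained from v either by replacing some component m > 1 of v by two consecutive components m', m'' with m' ≥ 1, m'' ≥ 1 and m' + m'' = m, or by deleting from v a component equal to 2. -/

import Mathlib

open Polynomial

/-- The monic polynomial `P_a(x) = x^n + a_1 x^{n-1} + … + a_n`. -/
noncomputable def Ppoly (n : ℕ) (a : Fin n → ℝ) : Polynomial ℝ :=
  X ^ n + ∑ i : Fin n, C (a i) * X ^ (n - 1 - (i : ℕ))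

/-- The multiplicity vector of `P_a`: the multiplicities of the distinct real
roots of `P_a`, listed in increasing order of the roots. -/
noncomputable def MV (n : ℕ) (a : Fin n → ℝ) : List ℕ :=
  ((Ppoly n a).roots.toFinset.sort (· ≤ ·)).map fun x => (Ppoly n a).rootMultiplicity x

/-- The stratum of `ℝ^n` associated with a multiplicity vector `v`. -/
def Stratum (n : ℕ) (v : List ℕ) : Set (Fin n → ℝ) := {a | MV n a = v}

/-- `SplitOne v w` : `w` is obtained from `v` by replacing some component
`m > 1` by two consecutive components `m' ≥ 1`, `m'' ≥ 1` with `m' + m'' = m`. -/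
def SplitOne (v w : List ℕ) : Prop :=
  ∃ (l₁ l₂ : List ℕ) (m m' m'' : ℕ), 1 < m ∧ 1 ≤ m' ∧ 1 ≤ m'' ∧ m' + m'' = m ∧
    v = l₁ ++ m :: l₂ ∧ w = l₁ ++ m' :: m'' :: l₂

/-- `DeleteTwo v w` : `w` is obtained from `v` by deleting a component equal
to `2`. -/
def DeleteTwo (v w : List ℕ) : Prop :=
  ∃ l₁ l₂ : List ℕ, v = l₁ ++ 2 :: l₂ ∧ w = l₁ ++ l₂

theorem natDegree_aux (n : ℕ) (a : Fin n → ℝ) :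
    (∑ i : Fin n, C (a i) * X ^ (n - 1 - (i : ℕ)) : ℝ[X]).degree < n := by
  refine lt_of_le_of_lt (Polynomial.degree_sum_le _ _) ?_
  refine (Finset.sup_lt_iff (WithBot.bot_lt_coe n)).2 ?_
  intro i _
  refine lt_of_le_of_lt (degree_C_mul_X_pow_le _ _) ?_
  have := i.2
  exact WithBot.coe_lt_coe.2 (by omega : n - 1 - (i:ℕ) < n)

theorem Ppoly_monic (n : ℕ) (a : Fin n → ℝ) : (Ppoly n a).Monic :=
  monic_X_pow_add (natDegree_aux n a)

theorem Ppoly_natDegree (n : ℕ) (a : Fin n → ℝ) : (Ppoly n a).natDegree = n := by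
  have := degree_add_eq_left_of_degree_lt (p := (X ^ n : ℝ[X]))
    (q := ∑ i : Fin n, C (a i) * X ^ (n - 1 - (i : ℕ))) (by
    rw [degree_X_pow]; exact natDegree_aux n a)
  rw [degree_X_pow] at this
  exact natDegree_eq_of_degree_eq_some this

theorem Ppoly_coeff (n : ℕ) (a : Fin n → ℝ) (i : Fin n) :
    (Ppoly n a).coeff (n - 1 - (i : ℕ)) = a i := by
  have hi := i.2
  unfold Ppoly
  rw [coeff_add, coeff_X_pow, if_neg (by omega), finsetSum_coeff, zero_add,
    Finset.sum_eq_single i]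
  · simp
  · intro j _ hj
    have := j.2
    rw [coeff_C_mul, coeff_X_pow, if_neg, mul_zero]
    intro h
    apply hj
    ext
    omega
  · simp

theorem Ppoly_of_monic (n : ℕ) (p : ℝ[X]) (hp : p.Monic) (hd : p.natDegree = n) :
    Ppoly n (fun i => p.coeff (n - 1 - (i : ℕ))) = p := by
  conv_rhs => rw [hp.as_sum, hd]
  unfold Ppoly
  congr 1
  rw [← Finset.sum_range_reflect, Finset.sum_range]

theorem Ppoly_eval (n : ℕ) (a : Fin n → ℝ) (t : ℝ) :
    (Ppoly n a).eval t = t ^ n + ∑ i : Fin n, a i * t ^ (n - 1 - (i : ℕ)) := by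
  simp [Ppoly, eval_finsetSum]

theorem Ppoly_eval_cont (n : ℕ) (t : ℝ) :
    Continuous (fun a : Fin n → ℝ => (Ppoly n a).eval t) := by
  simp only [Ppoly_eval]
  fun_prop

theorem Ppoly_root_bound (n : ℕ) (a : Fin n → ℝ) (t : ℝ) (h : (Ppoly n a).eval t = 0) :
    |t| ≤ 1 + ∑ i, |a i| := by
  have hS : 0 ≤ ∑ i, |a i| := Finset.sum_nonneg fun i _ => abs_nonneg _
  by_contra! hc
  have h1 : 1 < |t| := by linarith
  rw [Ppoly_eval] at h
  rcases Nat.eq_zero_or_pos n with rfl | hn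
  · simp at h
  have h2 : |t| ^ n = |∑ i : Fin n, a i * t ^ (n - 1 - (i : ℕ))| := by
    rw [← abs_pow, ← abs_neg]; congr 1; linarith
  have h3 : |∑ i : Fin n, a i * t ^ (n - 1 - (i : ℕ))| ≤ (∑ i, |a i|) * |t| ^ (n - 1) := by
    rw [Finset.sum_mul]
    refine (Finset.abs_sum_le_sum_abs _ _).trans (Finset.sum_le_sum fun i _ => ?_)
    rw [abs_mul, abs_pow]
    exact mul_le_mul_of_nonneg_left (pow_le_pow_right₀ h1.le (by omega)) (abs_nonneg _)
  have h4 : |t| ^ n = |t| * |t| ^ (n - 1) := by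
    rw [← pow_succ']; congr 1; omega
  have h5 : 0 < |t| ^ (n - 1) := by positivity
  have : |t| ≤ ∑ i, |a i| := by
    rw [← h2, h4] at h3
    exact le_of_mul_le_mul_right h3 h5
  linarith

theorem MV_of (n : ℕ) (a : Fin n → ℝ) (zs : List ℝ) (h : zs.Pairwise (· < ·))
    (hz : ∀ x, x ∈ zs ↔ (Ppoly n a).eval x = 0) :
    MV n a = zs.map fun x => (Ppoly n a).rootMultiplicity x := by
  unfold MV
  congr 1
  have hne := (Ppoly_monic n a).ne_zero
  refine List.Perm.eq_of_pairwise (le := (· ≤ ·)) (fun a b _ _ => le_antisymm) (Finset.pairwise_sort _ _) (h.imp le_of_lt) ?_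
  rw [List.perm_ext_iff_of_nodup (Finset.sort_nodup _ _) (h.imp ne_of_lt)]
  intro x
  simp [hne, hz]

theorem MV_spec (n : ℕ) (a : Fin n → ℝ) : ∃ zs : List ℝ, zs.Pairwise (· < ·) ∧
    (∀ x, x ∈ zs ↔ (Ppoly n a).eval x = 0) ∧
    MV n a = zs.map fun x => (Ppoly n a).rootMultiplicity x := by
  have hne := (Ppoly_monic n a).ne_zero
  refine ⟨_, (Finset.sortedLT_sort _).pairwise, ?_, rfl⟩
  intro x
  simp [hne]

/-! backward -/
def CC (f : ℝ → ℝ[X]) : Prop := ∀ k, Continuous fun e => (f e).coeff k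

theorem CC.mul {f g : ℝ → ℝ[X]} (hf : CC f) (hg : CC g) : CC fun e => f e * g e := by
  intro k
  simp only [coeff_mul]
  exact continuous_finsetSum _ fun i _ => (hf _).mul (hg _)

theorem CC.const (p : ℝ[X]) : CC fun _ => p := fun _ => continuous_const

theorem CC.pow {f : ℝ → ℝ[X]} (hf : CC f) (m : ℕ) : CC fun e => f e ^ m := by
  induction m with
  | zero => simpa using CC.const 1
  | succ m ih => simpa only [pow_succ] using ih.mul hf

theorem CC.addC {f : ℝ → ℝ[X]} (hf : CC f) : CC fun e => f e + C e := by
  intro k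
  simp only [coeff_add, coeff_C]
  refine (hf k).add ?_
  split_ifs
  · exact continuous_id
  · exact continuous_const

theorem CC.subC {f : ℝ → ℝ[X]} (hf : CC f) : CC fun e => f e - C e := by
  intro k
  simp only [coeff_sub, coeff_C]
  refine (hf k).sub ?_
  split_ifs
  · exact continuous_id
  · exact continuous_const

theorem closure_aux (n : ℕ) (a : Fin n → ℝ) (w : List ℕ) (f : ℝ → ℝ[X]) (hf : CC f)
    (h0 : f 0 = Ppoly n a) (hm : ∀ e, (f e).Monic) (hd : ∀ e, (f e).natDegree = n)
    (hw : ∀ᶠ e in nhdsWithin (0:ℝ) (Set.Ioi 0), ∃ zs : List ℝ, zs.Pairwise (· < ·) ∧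
      (∀ x, x ∈ zs ↔ (f e).eval x = 0) ∧ w = zs.map fun x => (f e).rootMultiplicity x) :
    a ∈ closure (Stratum n w) := by
  have hc : Continuous fun e => (fun i : Fin n => (f e).coeff (n - 1 - (i : ℕ))) :=
    continuous_pi fun i => hf _
  have ht := (hc.tendsto 0).mono_left (nhdsWithin_le_nhds (s := Set.Ioi 0))
  have h0' : (fun i : Fin n => (f 0).coeff (n - 1 - (i : ℕ))) = a := by
    funext i; rw [h0, Ppoly_coeff]
  rw [h0'] at ht
  refine mem_closure_of_tendsto ht ?_
  filter_upwards [hw] with e he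
  obtain ⟨zs, h1, h2, h3⟩ := he
  have hP := Ppoly_of_monic n (f e) (hm e) (hd e)
  have := MV_of n (fun i : Fin n => (f e).coeff (n - 1 - (i : ℕ))) zs h1 (by rwa [hP])
  rw [hP] at this
  change MV n _ = w
  rw [this, h3]

theorem rm_mul (p q : ℝ[X]) (h : p ≠ 0) (h' : q ≠ 0) (x : ℝ) :
    (p * q).rootMultiplicity x = p.rootMultiplicity x + q.rootMultiplicity x :=
  rootMultiplicity_mul (mul_ne_zero h h')

theorem rm_pow (z x : ℝ) (m : ℕ) :
    ((X - C z) ^ m : ℝ[X]).rootMultiplicity x = if x = z then m else 0 := by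
  rw [← count_roots, roots_pow, roots_X_sub_C]
  simp [Multiset.count_singleton]

/-- setup: decomposition at a root. -/
theorem decomp (n : ℕ) (a : Fin n → ℝ) (l₁ l₂ : List ℕ) (m : ℕ)
    (h : MV n a = l₁ ++ m :: l₂) : ∃ (z1 z2 : List ℝ) (z : ℝ) (R : ℝ[X]),
    (z1 ++ z :: z2).Pairwise (· < ·) ∧ Ppoly n a = (X - C z) ^ m * R ∧ R.Monic ∧
    m + R.natDegree = n ∧ R.eval z ≠ 0 ∧ (∀ x, x ≠ z → (x ∈ z1 ++ z2 ↔ R.eval x = 0)) ∧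
    l₁ = z1.map (fun x => R.rootMultiplicity x) ∧ l₂ = z2.map (fun x => R.rootMultiplicity x) := by
  obtain ⟨zs, h1, h2, h3⟩ := MV_spec n a
  rw [h, eq_comm, List.map_eq_append_iff] at h3
  obtain ⟨z1, zz, rfl, e1, e2⟩ := h3
  rw [List.map_eq_cons_iff] at e2
  obtain ⟨z, z2, rfl, e3, e4⟩ := e2
  have hne := (Ppoly_monic n a).ne_zero
  obtain ⟨R, hR, hRd⟩ := exists_eq_pow_rootMultiplicity_mul_and_not_dvd (Ppoly n a) hne z
  rw [e3] at hR
  have hRm : R.Monic := by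
    have := Ppoly_monic n a
    rw [hR] at this
    exact ((monic_X_sub_C z).pow m).of_mul_monic_left this
  have hmul : ∀ x, x ≠ z → (Ppoly n a).rootMultiplicity x = R.rootMultiplicity x := by
    intro x hx
    rw [hR, rm_mul _ _ ((monic_X_sub_C z).pow m).ne_zero hRm.ne_zero, rm_pow, if_neg hx, zero_add]
  have hz1 : ∀ x ∈ z1, x ≠ z := by
    intro x hx
    have := (List.pairwise_append.1 h1).2.2 x hx z (by simp)
    exact this.ne
  have hz2 : ∀ x ∈ z2, x ≠ z := by
    intro x hx
    have := (List.pairwise_cons.1 (List.pairwise_append.1 h1).2.1).1 x hx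
    exact this.ne'
  refine ⟨z1, z2, z, R, h1, hR, hRm, ?_, ?_, ?_, ?_, ?_⟩
  · have := Ppoly_natDegree n a
    rw [hR, ((monic_X_sub_C z).pow m).natDegree_mul hRm] at this
    simpa using this
  · intro h; exact hRd (dvd_iff_isRoot.2 h)
  · intro x hx
    have := h2 x
    rw [hR] at this
    simp [hx, sub_eq_zero] at this
    simp [← this]
  · rw [← e1]; exact List.map_congr_left fun x hx => hmul x (hz1 x hx)
  · rw [← e4]; exact List.map_congr_left fun x hx => hmul x (hz2 x hx)

theorem split_closure (n : ℕ) (a : Fin n → ℝ) (l₁ l₂ : List ℕ) (m' m'' : ℕ) (h1 : 1 ≤ m')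
    (h2 : 1 ≤ m'') (h : MV n a = l₁ ++ (m' + m'') :: l₂) :
    a ∈ closure (Stratum n (l₁ ++ m' :: m'' :: l₂)) := by
  obtain ⟨z1, z2, z, R, hp, hP, hRm, hRd, hRz, hRx, e1, e2⟩ := decomp n a l₁ l₂ _ h
  have hz1 : ∀ x ∈ z1, x < z := fun x hx => (List.pairwise_append.1 hp).2.2 x hx z (by simp)
  have hz2 : ∀ x ∈ z2, z < x := fun x hx =>
    (List.pairwise_cons.1 (List.pairwise_append.1 hp).2.1).1 x hx
  have hp12 := List.pairwise_append.1 hp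
  have hm : ∀ y : ℝ, ∀ k, ((X - C y) ^ k : ℝ[X]).Monic := fun y k => (monic_X_sub_C y).pow k
  refine closure_aux n a _ (fun e => (X - C z) ^ m' * ((X - C z - C e) ^ m'' * R)) ?_ ?_ ?_ ?_ ?_
  · exact (CC.const _).mul (((CC.const _).subC.pow _).mul (CC.const _))
  · simp only [map_zero, sub_zero]; rw [hP, pow_add, mul_assoc]
  · intro e
    have : (X - C z - C e : ℝ[X]) = X - C (z + e) := by rw [C_add]; ring
    simp only [this]
    exact (hm _ _).mul ((hm _ _).mul hRm)
  · intro e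
    have : (X - C z - C e : ℝ[X]) = X - C (z + e) := by rw [C_add]; ring
    simp only [this]
    rw [(hm _ _).natDegree_mul ((hm _ _).mul hRm), (hm _ _).natDegree_mul hRm]
    simp only [natDegree_pow, natDegree_X_sub_C]
    omega
  · have hev : ∀ᶠ e in nhdsWithin (0:ℝ) (Set.Ioi 0), ∀ x ∈ z2.toFinset, z + e < x := by
      rw [Filter.eventually_all_finset]
      intro x hx
      have hx := hz2 x (by simpa using hx)
      refine nhdsWithin_le_nhds ?_
      have : Filter.Tendsto (fun e : ℝ => z + e) (nhds 0) (nhds (z + 0)) :=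
        (continuous_const.add continuous_id).tendsto 0
      exact this.eventually_lt_const (by simpa using hx)
    filter_upwards [hev, self_mem_nhdsWithin] with e he he0
    have he0 : 0 < e := he0
    have he : ∀ x ∈ z2, z + e < x := by simpa using he
    have : (X - C z - C e : ℝ[X]) = X - C (z + e) := by rw [C_add]; ring
    simp only [this]
    have hrm : ∀ x, ((X - C z) ^ m' * ((X - C (z + e)) ^ m'' * R)).rootMultiplicity x =
        (if x = z then m' else 0) + ((if x = z + e then m'' else 0) + R.rootMultiplicity x) := by
      intro x
      rw [rm_mul _ _ (hm _ _).ne_zero ((hm _ _).mul hRm).ne_zero,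
        rm_mul _ _ (hm _ _).ne_zero hRm.ne_zero, rm_pow, rm_pow]
    have hRze : R.eval (z + e) ≠ 0 := by
      rw [Ne, ← hRx (z + e) (by linarith), List.mem_append]
      rintro (h | h)
      · linarith [hz1 _ h]
      · linarith [he _ h]
    refine ⟨z1 ++ z :: (z + e) :: z2, ?_, ?_, ?_⟩
    · rw [List.pairwise_append]
      refine ⟨hp12.1, ?_, ?_⟩
      · rw [List.pairwise_cons, List.pairwise_cons]
        refine ⟨?_, he, (List.pairwise_cons.1 hp12.2.1).2⟩
        intro x hx
        rcases List.mem_cons.1 hx with rfl | hx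
        · linarith
        · exact hz2 x hx
      · intro x hx y hy
        have := hz1 x hx
        rcases List.mem_cons.1 hy with rfl | hy
        · exact this
        rcases List.mem_cons.1 hy with rfl | hy
        · linarith
        · linarith [hz2 y hy]
    · intro x
      by_cases hx : x = z
      · subst hx; simp; omega
      · have := hRx x hx
        simp only [eval_mul, eval_pow, eval_sub, eval_X, eval_C, mul_eq_zero, pow_eq_zero_iff',
          sub_eq_zero, ← this, hx]
        simp
        have : m'' ≠ 0 := by omega
        tauto
    · simp only [hrm, List.map_append, List.map_cons]
      rw [e1, e2]
      congr 1
      · refine List.map_congr_left fun x hx => ?_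
        have := hz1 x hx
        rw [if_neg (by linarith), if_neg (by linarith)]; simp
      · congr 1
        · rw [if_pos trivial, if_neg (by linarith), rootMultiplicity_eq_zero hRz]; simp
        · congr 1
          · rw [if_neg (by linarith), if_pos trivial, rootMultiplicity_eq_zero hRze]; simp
          · refine List.map_congr_left fun x hx => ?_
            have := he x hx
            rw [if_neg (by linarith), if_neg (by linarith)]; simp

theorem delete_closure (n : ℕ) (a : Fin n → ℝ) (l₁ l₂ : List ℕ)
    (h : MV n a = l₁ ++ 2 :: l₂) :
    a ∈ closure (Stratum n (l₁ ++ l₂)) := by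
  obtain ⟨z1, z2, z, R, hp, hP, hRm, hRd, hRz, hRx, e1, e2⟩ := decomp n a l₁ l₂ _ h
  have hz1 : ∀ x ∈ z1, x < z := fun x hx => (List.pairwise_append.1 hp).2.2 x hx z (by simp)
  have hz2 : ∀ x ∈ z2, z < x := fun x hx =>
    (List.pairwise_cons.1 (List.pairwise_append.1 hp).2.1).1 x hx
  have hp12 := List.pairwise_append.1 hp
  have hdeg : ∀ e, (C e : ℝ[X]).degree < ((X - C z) ^ 2 : ℝ[X]).degree := by
    intro e
    refine lt_of_le_of_lt degree_C_le ?_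
    rw [degree_pow, degree_X_sub_C]; norm_num
  have hm : ∀ e : ℝ, ((X - C z) ^ 2 + C e : ℝ[X]).Monic := fun e =>
    ((monic_X_sub_C z).pow 2).add_of_left (hdeg e)
  refine closure_aux n a _ (fun e => ((X - C z) ^ 2 + C e) * R) ?_ ?_ ?_ ?_ ?_
  · exact (CC.const _).addC.mul (CC.const _)
  · simp only [map_zero, add_zero]; rw [hP]
  · intro e
    exact (hm _).mul hRm
  · intro e
    show (((X - C z) ^ 2 + C e) * R).natDegree = n
    rw [(hm _).natDegree_mul hRm, natDegree_add_eq_left_of_degree_lt (hdeg e)]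
    simp only [natDegree_pow, natDegree_X_sub_C]
    omega
  · filter_upwards [self_mem_nhdsWithin] with e he0
    have he0 : 0 < e := he0
    have hq : ∀ x, ((X - C z) ^ 2 + C e : ℝ[X]).eval x ≠ 0 := by
      intro x
      simp
      positivity
    refine ⟨z1 ++ z2, ?_, ?_, ?_⟩
    · exact hp.sublist (List.Sublist.append_left (List.sublist_cons_self _ _) _)
    · intro x
      rw [eval_mul, mul_eq_zero, or_iff_right (hq x)]
      by_cases hx : x = z
      · subst hx
        simp only [hRz, iff_false, List.mem_append]
        rintro (h | h)
        · linarith [hz1 _ h]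
        · linarith [hz2 _ h]
      · exact hRx x hx
    · rw [e1, e2, ← List.map_append]
      refine List.map_congr_left fun x hx => ?_
      show _ = (((X - C z) ^ 2 + C e) * R).rootMultiplicity x
      rw [rm_mul _ _ (hm e).ne_zero hRm.ne_zero, rootMultiplicity_eq_zero (hq x), zero_add]

theorem pos_of_no_root (Q : ℝ[X]) (hm : Q.Monic) (h : ∀ t, Q.eval t ≠ 0) (t : ℝ) :
    0 < Q.eval t := by
  by_contra! hc
  rcases le_or_gt Q.degree 0 with hd | hd
  · rw [hm.degree_le_zero_iff_eq_one.1 hd] at hc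
    norm_num at hc
  · have := tendsto_atTop_of_leadingCoeff_nonneg Q hd (by rw [hm.leadingCoeff]; norm_num)
    obtain ⟨s, hs⟩ := (this.eventually_ge_atTop 0).exists
    obtain ⟨r, hr⟩ := mem_range_of_exists_le_of_exists_ge Q.continuous ⟨t, hc⟩ ⟨s, hs⟩
    exact h r hr

theorem even_of_nonneg (Q : ℝ[X]) (hne : Q ≠ 0) (h : ∀ t, 0 ≤ Q.eval t) (z : ℝ) :
    Even (Q.rootMultiplicity z) := by
  by_contra ho
  rw [Nat.not_even_iff_odd] at ho
  obtain ⟨R, hR, hRd⟩ := exists_eq_pow_rootMultiplicity_mul_and_not_dvd Q hne z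
  generalize Q.rootMultiplicity z = k at *
  apply hRd
  rw [dvd_iff_isRoot]
  have hc : Filter.Tendsto (fun t => R.eval t) (nhds z) (nhds (R.eval z)) :=
    R.continuous.tendsto z
  have hQ : ∀ t, Q.eval t = (t - z) ^ k * R.eval t := by intro t; rw [hR]; simp
  apply le_antisymm
  · refine le_of_tendsto (hc.mono_left (nhdsWithin_le_nhds (s := Set.Iio z))) ?_
    filter_upwards [self_mem_nhdsWithin] with t ht
    have ht : t < z := ht
    have h1 := h t
    rw [hQ] at h1
    have h2 : (t - z) ^ k < 0 := ho.pow_neg (by linarith)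
    by_contra! h3
    nlinarith
  · refine ge_of_tendsto (hc.mono_left (nhdsWithin_le_nhds (s := Set.Ioi z))) ?_
    filter_upwards [self_mem_nhdsWithin] with t ht
    have ht : z < t := ht
    have h1 := h t
    rw [hQ] at h1
    have h2 : 0 < (t - z) ^ k := pow_pos (by linarith) _
    exact nonneg_of_mul_nonneg_right h1 h2

theorem stratum_factor (n : ℕ) (w : List ℕ) (b : Fin n → ℝ) (hb : b ∈ Stratum n w) :
    ∃ (x : Fin w.length → ℝ) (Q : ℝ[X]), StrictMono x ∧ (∀ j, (Ppoly n b).eval (x j) = 0) ∧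
      Ppoly n b = (∏ j, (X - C (x j)) ^ (w.get j)) * Q ∧ Q.natDegree ≤ n ∧
      ∀ t, 0 < Q.eval t := by
  have hne := (Ppoly_monic n b).ne_zero
  obtain ⟨Q, hQ, hd, hr⟩ := exists_prod_multiset_X_sub_C_mul (Ppoly n b)
  have hb' : MV n b = w := hb
  subst hb'
  have hlen : (Ppoly n b).roots.toFinset.card = (MV n b).length := by simp [MV]
  have hpm : (Multiset.map (fun a => X - C a) (Ppoly n b).roots).prod =
      ∏ j, (X - C ((Ppoly n b).roots.toFinset.orderEmbOfFin hlen j)) ^ ((MV n b).get j) := by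
    rw [Finset.prod_multiset_map_count]
    conv_lhs => rw [← Finset.map_orderEmbOfFin_univ _ hlen]
    rw [Finset.prod_map]
    refine Finset.prod_congr rfl fun j _ => ?_
    have : (MV n b).get j = (Ppoly n b).rootMultiplicity
        ((Ppoly n b).roots.toFinset.orderEmbOfFin hlen j) := by
      rw [Finset.orderEmbOfFin_apply, List.get_eq_getElem]
      exact List.getElem_map _
    rw [this]
    simp
  refine ⟨_, Q, ((Ppoly n b).roots.toFinset.orderEmbOfFin hlen).strictMono, ?_, ?_, ?_, ?_⟩
  · intro j
    have := Finset.orderEmbOfFin_mem (Ppoly n b).roots.toFinset hlen j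
    simp only [Multiset.mem_toFinset, mem_roots hne] at this
    exact this
  · rw [← hpm, hQ]
  · rw [Ppoly_natDegree] at hd; omega
  · have hm : Q.Monic := by
      have := Ppoly_monic n b
      rw [← hQ] at this
      exact (monic_multisetProd_X_sub_C _).of_mul_monic_left this
    refine pos_of_no_root Q hm fun t ht => ?_
    have : t ∈ Q.roots := (mem_roots hm.ne_zero).2 ht
    rw [hr] at this
    simp at this

theorem limit_factor (n : ℕ) (w : List ℕ) (a : Fin n → ℝ) (ha : a ∈ closure (Stratum n w)) :
    ∃ (y : Fin w.length → ℝ) (Q : ℝ[X]), Monotone y ∧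
      Ppoly n a = (∏ j, (X - C (y j)) ^ (w.get j)) * Q ∧ ∀ t, 0 ≤ Q.eval t := by
  obtain ⟨u, hu, hua⟩ := mem_closure_iff_ultrafilter.1 ha
  choose! x Q hx hroot hfac hdeg hpos using stratum_factor n w
  have hu' : ∀ᶠ b in (u : Filter _), b ∈ Stratum n w := hu
  set B : ℝ := 2 + ∑ i, |a i| with hB
  have hbd : ∀ᶠ b in (u : Filter (Fin n → ℝ)), 1 + ∑ i, |b i| < B := by
    have hc : Continuous fun b : Fin n → ℝ => 1 + ∑ i, |b i| := by fun_prop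
    exact ((hc.tendsto a).mono_left hua).eventually_lt_const (by rw [hB]; linarith)
  have hxB : ∀ j, ∀ᶠ b in (u : Filter _), x b j ∈ Set.Icc (-B) B := by
    intro j
    filter_upwards [hu', hbd] with b hb hb2
    have := Ppoly_root_bound n b _ (hroot b hb j)
    exact abs_le.1 (by linarith)
  have hlim : ∀ j, ∃ y ∈ Set.Icc (-B) B, Filter.Tendsto (fun b => x b j) u (nhds y) := by
    intro j
    exact isCompact_Icc.ultrafilter_le_nhds (u.map fun b => x b j) (by
      rw [Filter.le_principal_iff]; exact hxB j)
  choose y hyB hy using hlim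
  have hev : ∀ t, Filter.Tendsto (fun b => (Ppoly n b).eval t) u (nhds ((Ppoly n a).eval t)) :=
    fun t => ((Ppoly_eval_cont n t).tendsto a).mono_left hua
  have hpr : ∀ t, Filter.Tendsto (fun b => ∏ j, (t - x b j) ^ (w.get j)) u
      (nhds (∏ j, (t - y j) ^ (w.get j))) := fun t =>
    tendsto_finsetProd _ fun j _ => (tendsto_const_nhds.sub (hy j)).pow _
  have hfe : ∀ t, ∀ b ∈ Stratum n w,
      (Ppoly n b).eval t = (∏ j, (t - x b j) ^ (w.get j)) * (Q b).eval t := by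
    intro t b hb
    conv_lhs => rw [hfac b hb]
    simp [eval_prod]
  set T : ℕ → ℝ := fun i => B + 1 + i with hT
  have hTne : ∀ i, ∏ j, (T i - y j) ^ (w.get j) ≠ 0 := by
    intro i
    refine Finset.prod_ne_zero_iff.2 fun j _ => pow_ne_zero _ ?_
    have := (hyB j).2
    have h0 : (0:ℝ) ≤ i := Nat.cast_nonneg i
    simp only [hT]
    intro h
    linarith
  have hTinj : Set.InjOn T (Finset.range (n + 1)) := by
    intro i _ j _ h
    simpa [hT] using h
  set c : ℕ → ℝ := fun i => (Ppoly n a).eval (T i) / ∏ j, (T i - y j) ^ (w.get j) with hc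
  have hQT : ∀ i, Filter.Tendsto (fun b => (Q b).eval (T i)) u (nhds (c i)) := by
    intro i
    refine ((hev (T i)).div (hpr (T i)) (hTne i)).congr' ?_
    filter_upwards [hu', (hpr (T i)).eventually_ne (hTne i)] with b hb hne
    rw [Pi.div_apply, hfe _ b hb]
    field_simp
  let Q0 : ℝ[X] := Lagrange.interpolate (Finset.range (n + 1)) T c
  have hQ0 : ∀ t, Filter.Tendsto (fun b => (Q b).eval t) u (nhds (Q0.eval t)) := by
    intro t
    have h1 : Filter.Tendsto (fun b => ∑ i ∈ Finset.range (n + 1),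
        (Q b).eval (T i) * (Lagrange.basis (Finset.range (n + 1)) T i).eval t) u
        (nhds (∑ i ∈ Finset.range (n + 1),
          c i * (Lagrange.basis (Finset.range (n + 1)) T i).eval t)) :=
      tendsto_finsetSum _ fun i _ => (hQT i).mul_const _
    have h2 : Q0.eval t = ∑ i ∈ Finset.range (n + 1),
          c i * (Lagrange.basis (Finset.range (n + 1)) T i).eval t := by
      simp only [Q0, Lagrange.interpolate_apply, eval_finsetSum, eval_mul, eval_C]
    rw [h2]
    refine h1.congr' ?_
    filter_upwards [hu'] with b hb
    have hd : (Q b).degree < (Finset.range (n + 1)).card := by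
      refine lt_of_le_of_lt (degree_le_of_natDegree_le (hdeg b hb)) ?_
      rw [Finset.card_range]
      exact_mod_cast Nat.lt_succ_self n
    have := congrArg (eval t) (Lagrange.eq_interpolate hTinj hd)
    rw [this]
    simp only [Lagrange.interpolate_apply, eval_finsetSum, eval_mul, eval_C]
  refine ⟨y, Q0, ?_, ?_, ?_⟩
  · intro i j hij
    refine le_of_tendsto_of_tendsto (hy i) (hy j) ?_
    filter_upwards [hu'] with b hb
    exact (hx b hb).monotone hij
  · refine Polynomial.funext fun t => ?_
    have h1 := (hpr t).mul (hQ0 t)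
    have h2 : (fun b => (∏ j, (t - x b j) ^ (w.get j)) * (Q b).eval t) =ᶠ[u]
        fun b => (Ppoly n b).eval t := by
      filter_upwards [hu'] with b hb
      exact (hfe t b hb).symm
    have := tendsto_nhds_unique (hev t) (h1.congr' h2)
    rw [this]
    simp [eval_prod]
  · intro t
    refine ge_of_tendsto (hQ0 t) ?_
    filter_upwards [hu'] with b hb
    exact (hpos b hb t).le

/-! combinatorics -/

noncomputable def blk (L : List (ℝ × ℕ)) (z : ℝ) : List ℕ := (L.filter fun p => decide (p.1 = z)).map Prod.snd

theorem rm_list (L : List (ℝ × ℕ)) (z : ℝ) :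
    ((L.map fun p => (X - C p.1 : ℝ[X]) ^ p.2).prod).rootMultiplicity z = (blk L z).sum := by
  induction L with
  | nil =>
    have : (1 : ℝ[X]).rootMultiplicity z = 0 := rootMultiplicity_eq_zero (by simp)
    simpa [blk] using this
  | cons p L ih =>
    have hne : (L.map fun p => (X - C p.1 : ℝ[X]) ^ p.2).prod ≠ 0 := by
      refine List.prod_ne_zero ?_
      simp only [List.mem_map, not_exists, not_and]
      intro p _
      exact ((monic_X_sub_C p.1).pow _).ne_zero
    rw [List.map_cons, List.prod_cons, rm_mul _ _ ((monic_X_sub_C p.1).pow _).ne_zero hne, ih,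
      rm_pow]
    by_cases h : p.1 = z
    · simp [blk, h]
    · simp [blk, h, Ne.symm h]

theorem blk_flatten (zs : List ℝ) (h : zs.Pairwise (· < ·)) (L : List (ℝ × ℕ))
    (hL : L.Pairwise (fun p q => p.1 ≤ q.1)) (hm : ∀ p ∈ L, p.1 ∈ zs) :
    L.map Prod.snd = (zs.map (blk L)).flatten := by
  induction L with
  | nil =>
    have : zs.map (blk []) = zs.map fun _ => [] := rfl
    rw [this]
    simp
  | cons p L ih =>
    have ih := ih hL.of_cons fun q hq => hm q (List.mem_cons_of_mem _ hq)
    obtain ⟨s, t, rfl⟩ := List.append_of_mem (hm p (by simp))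
    have hp := List.pairwise_append.1 h
    have hs : ∀ z ∈ s, z < p.1 := fun z hz => hp.2.2 z hz p.1 (by simp)
    have ht : ∀ z ∈ t, p.1 < z := (List.pairwise_cons.1 hp.2.1).1
    have hLp : ∀ q ∈ L, p.1 ≤ q.1 := (List.pairwise_cons.1 hL).1
    have e1 : s.map (blk (p :: L)) = s.map fun _ => [] := by
      refine List.map_congr_left fun z hz => ?_
      have := hs z hz
      simp only [blk, List.map_eq_nil_iff, List.filter_eq_nil_iff, decide_eq_true_eq]
      intro q hq
      rcases List.mem_cons.1 hq with rfl | hq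
      · exact this.ne'
      · exact (this.trans_le (hLp q hq)).ne'
    have e1' : s.map (blk L) = s.map fun _ => [] := by
      refine List.map_congr_left fun z hz => ?_
      have := hs z hz
      simp only [blk, List.map_eq_nil_iff, List.filter_eq_nil_iff, decide_eq_true_eq]
      intro q hq
      exact (this.trans_le (hLp q hq)).ne'
    have e2 : t.map (blk (p :: L)) = t.map (blk L) := by
      refine List.map_congr_left fun z hz => ?_
      have := ht z hz
      simp [blk, this.ne]
    have e3 : blk (p :: L) p.1 = p.2 :: blk L p.1 := by simp [blk]
    rw [List.map_cons, ih]
    simp only [List.map_append, List.map_cons, List.flatten_append, List.flatten_cons, e1, e1',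
      e2, e3]
    simp

def BRel (m : ℕ) (b : List ℕ) : Prop := 0 < m ∧ b.sum ≤ m ∧ Even (m - b.sum) ∧ ∀ k ∈ b, 0 < k

theorem comb_le {v : List ℕ} {bs : List (List ℕ)} (h : List.Forall₂ BRel v bs) :
    bs.flatten.sum + v.length ≤ v.sum + bs.flatten.length := by
  induction h with
  | nil => simp
  | @cons m b v bs hr _ ih =>
    obtain ⟨h1, h2, h3, h4⟩ := hr
    simp only [List.flatten_cons, List.sum_append, List.length_append, List.length_cons,
      List.sum_cons]
    rcases b with _ | ⟨k, b⟩
    · simp at *; omega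
    · simp at *; omega

theorem len_le_sum (b : List ℕ) (h : ∀ k ∈ b, 0 < k) : b.length ≤ b.sum := by
  induction b with
  | nil => simp
  | cons k b ih =>
    have := h k (by simp)
    have := ih fun k hk => h k (by simp [hk])
    simp; omega

theorem rel_zero {m : ℕ} {b : List ℕ} (h : BRel m b) (he : m + b.length ≤ b.sum + 1) : b = [m] := by
  obtain ⟨h1, h2, h3, h4⟩ := h
  rcases b with _ | ⟨k, _ | ⟨l, b⟩⟩
  · simp at *
    have : m = 1 := by omega
    subst this
    simp at h3
  · simp at *; omega
  · simp at *; omega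

theorem rel_one {m : ℕ} {b : List ℕ} (h : BRel m b) (he : m + b.length = b.sum + 2) :
    (m = 2 ∧ b = []) ∨ ∃ k l, 1 ≤ k ∧ 1 ≤ l ∧ k + l = m ∧ b = [k, l] := by
  obtain ⟨h1, h2, h3, h4⟩ := h
  rcases b with _ | ⟨k, _ | ⟨l, _ | ⟨r, b⟩⟩⟩
  · left; simp at *; omega
  · simp at *
    have : m - k = 1 := by omega
    rw [this] at h3
    simp at h3
  · right
    simp at h2 h4 he
    exact ⟨k, l, by omega, by omega, by omega, rfl⟩
  · simp at *; omega

theorem comb_zero {v : List ℕ} {bs : List (List ℕ)} (h : List.Forall₂ BRel v bs)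
    (he : v.sum + bs.flatten.length ≤ bs.flatten.sum + v.length) : bs.flatten = v := by
  induction h with
  | nil => simp
  | @cons m b v bs hr hrs ih =>
    have hle := comb_le hrs
    have hle1 := comb_le (List.Forall₂.cons hr List.Forall₂.nil)
    simp only [List.flatten_cons, List.sum_append, List.length_append, List.length_cons,
      List.sum_cons, List.flatten_nil, List.append_nil, List.sum_nil, List.length_nil] at *
    rw [rel_zero hr (by omega), ih (by omega)]
    rfl

theorem comb_one {v : List ℕ} {bs : List (List ℕ)} (h : List.Forall₂ BRel v bs)
    (he : v.sum + bs.flatten.length = bs.flatten.sum + v.length + 1) :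
    SplitOne v bs.flatten ∨ DeleteTwo v bs.flatten := by
  induction h with
  | nil => simp at he
  | @cons m b v bs hr hrs ih =>
    have hle := comb_le hrs
    have hle1 := comb_le (List.Forall₂.cons hr List.Forall₂.nil)
    simp only [List.flatten_cons, List.sum_append, List.length_append, List.length_cons,
      List.sum_cons, List.flatten_nil, List.append_nil, List.sum_nil, List.length_nil] at *
    by_cases hc : m + b.length ≤ b.sum + 1
    · rw [rel_zero hr hc]
      rw [rel_zero hr hc] at he
      simp only [List.length_singleton, List.sum_singleton] at he
      rcases ih (by omega) with ⟨l₁, l₂, k, k', k'', h1, h2, h3, h4, h5, h6⟩ | ⟨l₁, l₂, h5, h6⟩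
      · left
        exact ⟨m :: l₁, l₂, k, k', k'', h1, h2, h3, h4, by rw [h5]; rfl, by rw [h6]; rfl⟩
      · right
        exact ⟨m :: l₁, l₂, by rw [h5]; rfl, by rw [h6]; rfl⟩
    · rw [comb_zero hrs (by omega)]
      rcases rel_one hr (by omega) with ⟨rfl, rfl⟩ | ⟨k, l, h1, h2, h3, rfl⟩
      · right
        exact ⟨[], v, rfl, rfl⟩
      · left
        exact ⟨[], v, m, k, l, by omega, h1, h2, h3, rfl, rfl⟩

theorem forward (n : ℕ) (v w : List ℕ)
    (hv : ∀ m ∈ v, 0 < m) (hw : ∀ m ∈ w, 0 < m) (a : Fin n → ℝ) (hav : a ∈ Stratum n v)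
    (haw : a ∈ closure (Stratum n w))
    (he : v.sum + w.length = w.sum + v.length + 1) : SplitOne v w ∨ DeleteTwo v w := by
  obtain ⟨y, Q, hy, hP, hQ⟩ := limit_factor n w a haw
  obtain ⟨zs, hzs, hzr, hMV⟩ := MV_spec n a
  have hav : MV n a = v := hav
  rw [hav] at hMV
  have hne := (Ppoly_monic n a).ne_zero
  let L : List (ℝ × ℕ) := List.ofFn fun j => (y j, w.get j)
  have hLw : L.map Prod.snd = w := by
    simp only [L, List.map_ofFn]
    exact List.ofFn_get w
  have hLp : (L.map fun p => (X - C p.1 : ℝ[X]) ^ p.2).prod = ∏ j, (X - C (y j)) ^ (w.get j) := by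
    simp only [L, List.map_ofFn, List.prod_ofFn]
    rfl
  rw [← hLp] at hP
  have hne2 := hne
  rw [hP] at hne2
  have hsort : L.Pairwise (fun p q => p.1 ≤ q.1) := by
    simp only [L, List.pairwise_ofFn]
    intro i j hij
    exact hy hij.le
  have hmem : ∀ p ∈ L, p.1 ∈ zs := by
    intro p hp
    rw [hzr, hP, eval_mul, eval_list_prod]
    have h2 : p.2 ≠ 0 := by
      have : p.2 ∈ w := by rw [← hLw]; exact List.mem_map_of_mem hp
      exact (hw _ this).ne'
    have : (0:ℝ) ∈ List.map (eval p.1) (L.map fun p => (X - C p.1 : ℝ[X]) ^ p.2) := by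
      rw [List.map_map]
      refine List.mem_map.2 ⟨p, hp, ?_⟩
      simp [h2]
    rw [List.prod_eq_zero this, zero_mul]
  have hfl := blk_flatten zs hzs L hsort hmem
  rw [hLw] at hfl
  have hrel : List.Forall₂ BRel v (zs.map (blk L)) := by
    rw [hMV, List.forall₂_map_left_iff, List.forall₂_map_right_iff, List.forall₂_same]
    intro z hz
    have hmul : (Ppoly n a).rootMultiplicity z = (blk L z).sum + Q.rootMultiplicity z := by
      rw [hP, rm_mul _ _ (left_ne_zero_of_mul hne2) (right_ne_zero_of_mul hne2), rm_list]
    refine ⟨?_, ?_, ?_, ?_⟩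
    · exact hv _ (by rw [hMV]; exact List.mem_map_of_mem hz)
    · omega
    · rw [hmul, Nat.add_sub_cancel_left]
      exact even_of_nonneg Q (right_ne_zero_of_mul hne2) hQ z
    · intro k hk
      apply hw
      rw [hfl, List.mem_flatten]
      exact ⟨_, List.mem_map_of_mem hz, hk⟩
  rw [hfl] at he ⊢
  exact comb_one hrel he

/-- Let `T = S_v` be a nonempty stratum of dimension `d = n − r(v) < n`.  A
nonempty stratum `S_w` of dimension `d + 1` (i.e. with `r(w) = r(v) − 1`)
satisfies `T ⊆ closure (S_w)` iff `w` is obtained from `v` either by replacing a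
component `m > 1` by two components `m' ≥ 1`, `m'' ≥ 1` with `m' + m'' = m`, or
by deleting a component equal to `2`. -/
theorem adjacency_codim_one (n : ℕ) (hn : 1 ≤ n) (v w : List ℕ)
    (hv : ∀ m ∈ v, 0 < m) (hw : ∀ m ∈ w, 0 < m)
    (hnev : (Stratum n v).Nonempty) (hnew : (Stratum n w).Nonempty)
    (hd : 0 < v.sum - v.length)
    (hr : v.sum - v.length = (w.sum - w.length) + 1) :
    Stratum n v ⊆ closure (Stratum n w) ↔ SplitOne v w ∨ DeleteTwo v w := by
  have lv := len_le_sum v hv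
  have lw := len_le_sum w hw
  constructor
  · intro h
    obtain ⟨a, ha⟩ := hnev
    exact forward n v w hv hw a ha (h ha) (by omega)
  · rintro (⟨l₁, l₂, m, m', m'', _, h1, h2, rfl, rfl, rfl⟩ | ⟨l₁, l₂, rfl, rfl⟩) a ha
    · exact split_closure n a l₁ l₂ m' m'' h1 h2 ha
    · exact delete_closure n a l₁ l₂ ha
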